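/- arXiv:2001.01836 — 5 statements merged into one kernel-verified Lean document; each statement's English description precedes it below -/
import Mathlib

section
/- Let h* = (h1*, …, hn*) with h1* < h2* < … < hn* be a local maximum of the mutual information I_n over the open set of strictly ordered thresholding vectors. Assume φ0 and φ1 are continuous, that A11(h*), A22(h*), q0(h*) all lie in the open interval (0,1), that φ1(hi*) > 0 for every i, and that q0(h*) ≠ A11(h*). Then the likelihood ratio is the same at every threshold: for all i, j ∈ {1,…,n}, φ0(hi*)/φ1(hi*) = φ0(hj*)/φ1(hj*); moreover this common value equals r* = −(p1/p0) · (log((1−q0(h*))/q0(h*)) + log((1−A22(h*))/A22(h*))) / (log((1−q0(h*))/q0(h*)) − log((1−A11(h*))/A11(h*))). -/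
/-!
Moving the single threshold `hᵢ` to a nearby `t`, the others being fixed, changes the integral of a
density `φ` over the odd union by `s · ∫_{hᵢ}^t φ`, where the sign `s = ±1` is the parity of the
number of other thresholds below `hᵢ` and does not depend on `φ` (`hasDerivAt_setIntegral_oddUnion`).
Hence the partial derivatives of `A11`, `A22`, `q0` at `h` are `s φ0(hᵢ)`, `-s φ1(hᵢ)` and
`s (p0 φ0(hᵢ) + p1 φ1(hᵢ))`. Since strictly ordered vectors form an open set, the partial derivatives
of the mutual information vanish at a local maximum; as `Hb' w = log ((1 - w) / w)`, this reads
`p0 φ0(hᵢ) (L q0 - L A11) = - p1 φ1(hᵢ) (L q0 + L A22)` with `L w = log ((1 - w) / w)`. Injectivity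
of `L` on `(0, 1)` and `q0 ≠ A11` allow division, which gives the value `r*`, independent of `i`.
-/

open MeasureTheory Real Set Filter

/-- Binary entropy function. -/
noncomputable def Hb (w : ℝ) : ℝ := -(w * Real.log w) - (1 - w) * Real.log (1 - w)

/-- The union of the odd-indexed pieces of the partition of ℝ induced by the
thresholds `h 0 < h 1 < ⋯ < h (n-1)`, i.e. `(-∞, h 0) ∪ [h 1, h 2) ∪ ⋯`:
a point `y` belongs to it iff the number of thresholds `≤ y` is even. -/
def oddUnion {n : ℕ} (h : Fin n → ℝ) : Set ℝ :=
  {y | Even (Finset.univ.filter (fun i => h i ≤ y)).card}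

noncomputable def A11 (φ0 : ℝ → ℝ) {n : ℕ} (h : Fin n → ℝ) : ℝ := ∫ y in oddUnion h, φ0 y

noncomputable def A22 (φ1 : ℝ → ℝ) {n : ℕ} (h : Fin n → ℝ) : ℝ := ∫ y in (oddUnion h)ᶜ, φ1 y

noncomputable def q0 (p0 p1 : ℝ) (φ0 φ1 : ℝ → ℝ) {n : ℕ} (h : Fin n → ℝ) : ℝ :=
  p0 * A11 φ0 h + p1 * (1 - A22 φ1 h)

/-- Mutual information of the quantizer with thresholding vector `h`. -/
noncomputable def MI (p0 p1 : ℝ) (φ0 φ1 : ℝ → ℝ) {n : ℕ} (h : Fin n → ℝ) : ℝ :=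
  Hb (q0 p0 p1 φ0 φ1 h) - p0 * Hb (A11 φ0 h) - p1 * Hb (A22 φ1 h)

/-- The sign `(-1) ^ #{j ≠ i | h j ≤ y}`. -/
noncomputable def otherSign {n : ℕ} (h : Fin n → ℝ) (i : Fin n) (y : ℝ) : ℝ :=
  ∏ j ∈ Finset.univ.erase i, (if h j ≤ y then (-1 : ℝ) else 1)

lemma abs_otherSign {n : ℕ} (h : Fin n → ℝ) (i : Fin n) (y : ℝ) : |otherSign h i y| = 1 := by
  unfold otherSign
  rw [Finset.abs_prod]
  apply Finset.prod_eq_one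
  intro j _
  split_ifs <;> simp

lemma measurable_otherSign {n : ℕ} (h : Fin n → ℝ) (i : Fin n) :
    Measurable (otherSign h i) := by
  unfold otherSign
  apply Finset.measurable_fun_prod
  intro j _
  exact Measurable.ite measurableSet_Ici measurable_const measurable_const

lemma otherSign_eventuallyEq {n : ℕ} (h : Fin n → ℝ) (hm : StrictMono h) (i : Fin n) :
    ∀ᶠ y in nhds (h i), otherSign h i y = otherSign h i (h i) := by
  have key : ∀ j : Fin n, j ≠ i → ∀ᶠ y in nhds (h i), (h j ≤ y ↔ h j ≤ h i) := by
    intro j hj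
    rcases lt_or_gt_of_ne (hm.injective.ne hj) with hlt | hlt
    · filter_upwards [lt_mem_nhds hlt] with y hy
      exact ⟨fun _ => hlt.le, fun _ => hy.le⟩
    · filter_upwards [gt_mem_nhds hlt] with y hy
      exact ⟨fun hh => absurd hh (not_le.2 hy), fun hh => absurd hh (not_le.2 hlt)⟩
  have key' : ∀ᶠ y in nhds (h i), ∀ j : Fin n, j ≠ i → (h j ≤ y ↔ h j ≤ h i) := by
    rw [Filter.eventually_all]
    intro j
    by_cases hj : j = i
    · simp [hj]
    · filter_upwards [key j hj] with y hy _ using hy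
  filter_upwards [key'] with y hy
  unfold otherSign
  apply Finset.prod_congr rfl
  intro j hj
  simp only [hy j (Finset.ne_of_mem_erase hj)]

lemma measurableSet_oddUnion {n : ℕ} (h : Fin n → ℝ) : MeasurableSet (oddUnion h) := by
  have : oddUnion h = {y | (∏ j, (if h j ≤ y then (-1 : ℝ) else 1)) = 1} := by
    ext y
    simp only [oddUnion, Set.mem_ofPred_eq, Finset.prod_ite, Finset.prod_const, one_pow, mul_one]
    exact (neg_one_pow_eq_one_iff_even (by norm_num)).symm
  rw [this]
  refine measurableSet_eq_fun ?_ measurable_const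
  apply Finset.measurable_fun_prod
  intro j _
  exact Measurable.ite measurableSet_Ici measurable_const measurable_const

/-- The indicator of the odd union is `(1 + ε) / 2`, where `ε = ± otherSign` according to the side
of the moved threshold `t`. -/
lemma indicator_oddUnion_update {n : ℕ} (h : Fin n → ℝ) (i : Fin n) (t : ℝ) (φ : ℝ → ℝ) (y : ℝ) :
    (oddUnion (Function.update h i t)).indicator φ y =
      (1 / 2) * (φ y - otherSign h i y * φ y) +
        (Set.Iio t).indicator (fun y => otherSign h i y * φ y) y := by
  have hprod : (-1 : ℝ) ^ (Finset.univ.filter (fun j => Function.update h i t j ≤ y)).card =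
      (if t ≤ y then (-1 : ℝ) else 1) * otherSign h i y := by
    have : (-1 : ℝ) ^ (Finset.univ.filter (fun j => Function.update h i t j ≤ y)).card =
        ∏ j, (if Function.update h i t j ≤ y then (-1 : ℝ) else 1) := by
      simp [Finset.prod_ite]
    rw [this, ← Finset.mul_prod_erase _ _ (Finset.mem_univ i)]
    simp only [Function.update_self, otherSign]
    congr 1
    apply Finset.prod_congr rfl
    intro j hj
    rw [Function.update_of_ne (Finset.ne_of_mem_erase hj)]
  have hind : (oddUnion (Function.update h i t)).indicator φ y =
      (1 / 2) * (1 + (-1 : ℝ) ^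
        (Finset.univ.filter (fun j => Function.update h i t j ≤ y)).card) * φ y := by
    by_cases he : Even (Finset.univ.filter (fun j => Function.update h i t j ≤ y)).card
    · rw [Set.indicator_of_mem (show y ∈ oddUnion _ from he), he.neg_one_pow]
      ring
    · rw [Set.indicator_of_notMem (show y ∉ oddUnion _ from he),
        (Nat.not_even_iff_odd.1 he).neg_one_pow]
      ring
  rw [hind, hprod]
  by_cases hty : t ≤ y
  · simp [hty]
    ring
  · rw [Set.indicator_of_mem (show y ∈ Set.Iio t from not_le.1 hty), if_neg hty]
    ring

lemma hasDerivAt_setIntegral_oddUnion {n : ℕ} (h : Fin n → ℝ) (hm : StrictMono h) (i : Fin n)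
    (φ : ℝ → ℝ) (hi : Integrable φ) (hc : Continuous φ) :
    HasDerivAt (fun t => ∫ y in oddUnion (Function.update h i t), φ y)
      (otherSign h i (h i) * φ (h i)) (h i) := by
  have hR : Integrable (fun y => otherSign h i y * φ y) := by
    refine hi.bdd_mul (c := 1) (measurable_otherSign h i).aestronglyMeasurable ?_
    filter_upwards with y
    rw [Real.norm_eq_abs, abs_otherSign]
  have hform : ∀ t, ∫ y in oddUnion (Function.update h i t), φ y =
      ((∫ y, (1 / 2) * (φ y - otherSign h i y * φ y)) +
        ∫ y in Set.Iic (h i), otherSign h i y * φ y) +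
        ∫ y in (h i)..t, otherSign h i y * φ y := by
    intro t
    rw [← integral_indicator (measurableSet_oddUnion _)]
    simp_rw [indicator_oddUnion_update]
    have hhalf : Integrable (fun y => (1 / 2) * (φ y - otherSign h i y * φ y)) :=
      (hi.sub hR).const_mul _
    rw [integral_add hhalf (hR.indicator measurableSet_Iio),
      integral_indicator measurableSet_Iio, ← integral_Iic_eq_integral_Iio,
      ← intervalIntegral.integral_Iic_sub_Iic hR.integrableOn hR.integrableOn]
    ring
  simp_rw [hform]
  apply HasDerivAt.const_add
  refine intervalIntegral.integral_hasDerivAt_right hR.intervalIntegrable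
    (hR.aestronglyMeasurable.stronglyMeasurableAtFilter) ?_
  have hcont : ContinuousAt (fun y => otherSign h i (h i) * φ y) (h i) :=
    (continuous_const.mul hc).continuousAt
  refine hcont.congr ?_
  filter_upwards [otherSign_eventuallyEq h hm i] with y hy
  rw [hy]

lemma hasDerivAt_Hb {w : ℝ} (hw : w ∈ Set.Ioo (0 : ℝ) 1) :
    HasDerivAt Hb (Real.log ((1 - w) / w)) w := by
  have h0 : w ≠ 0 := hw.1.ne'
  have h1 : 1 - w ≠ 0 := by linarith [hw.2]
  have hEq : Hb = Real.binEntropy := by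
    funext x
    simp only [Hb, Real.binEntropy, Real.log_inv]
    ring
  rw [hEq, Real.log_div h1 h0]
  exact Real.hasDerivAt_binEntropy h0 hw.2.ne

lemma logit_injective {a b : ℝ} (ha : a ∈ Set.Ioo (0 : ℝ) 1) (hb : b ∈ Set.Ioo (0 : ℝ) 1)
    (hab : Real.log ((1 - a) / a) = Real.log ((1 - b) / b)) : a = b := by
  obtain ⟨ha0, ha1⟩ := ha
  obtain ⟨hb0, hb1⟩ := hb
  have := Real.log_injOn_pos (div_pos (sub_pos.2 ha1) ha0) (div_pos (sub_pos.2 hb1) hb0) hab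
  rw [div_eq_div_iff ha0.ne' hb0.ne'] at this
  linarith

lemma isOpen_strictMono (n : ℕ) : IsOpen {h : Fin n → ℝ | StrictMono h} := by
  have : {h : Fin n → ℝ | StrictMono h} =
      ⋂ a : Fin n, ⋂ b : Fin n, {h : Fin n → ℝ | a < b → h a < h b} := by
    ext h
    simp only [Set.mem_ofPred_eq, Set.mem_iInter]
    exact ⟨fun hh a b hab => hh hab, fun hh a b hab => hh a b hab⟩
  rw [this]
  refine isOpen_iInter_of_finite fun a => isOpen_iInter_of_finite fun b => ?_
  by_cases hab : a < b
  · simpa [hab] using isOpen_lt (continuous_apply a) (continuous_apply b)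
  · simp [hab]

theorem stmt_0
    (p0 p1 : ℝ) (hp0 : p0 ∈ Set.Ioo (0:ℝ) 1) (hp1 : p1 ∈ Set.Ioo (0:ℝ) 1)
    (hp : p0 + p1 = 1)
    (φ0 φ1 : ℝ → ℝ) (hφ0 : ∀ y, 0 ≤ φ0 y) (hφ1 : ∀ y, 0 ≤ φ1 y)
    (hi0 : Integrable φ0) (hi1 : Integrable φ1)
    (hI0 : ∫ y, φ0 y = 1) (hI1 : ∫ y, φ1 y = 1)
    (hc0 : Continuous φ0) (hc1 : Continuous φ1)
    (n : ℕ) (hn : 0 < n) (hstar : Fin n → ℝ) (hmono : StrictMono hstar)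
    (hmax : IsLocalMaxOn (fun h : Fin n → ℝ => MI p0 p1 φ0 φ1 h)
      {h : Fin n → ℝ | StrictMono h} hstar)
    (hA11 : A11 φ0 hstar ∈ Set.Ioo (0:ℝ) 1)
    (hA22 : A22 φ1 hstar ∈ Set.Ioo (0:ℝ) 1)
    (hq0 : q0 p0 p1 φ0 φ1 hstar ∈ Set.Ioo (0:ℝ) 1)
    (hpos : ∀ i, 0 < φ1 (hstar i))
    (hne : q0 p0 p1 φ0 φ1 hstar ≠ A11 φ0 hstar) :
    (∀ i j : Fin n, φ0 (hstar i) / φ1 (hstar i) = φ0 (hstar j) / φ1 (hstar j)) ∧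
    (∀ i : Fin n, φ0 (hstar i) / φ1 (hstar i) =
      -(p1 / p0) *
        ((Real.log ((1 - q0 p0 p1 φ0 φ1 hstar) / q0 p0 p1 φ0 φ1 hstar) +
            Real.log ((1 - A22 φ1 hstar) / A22 φ1 hstar)) /
          (Real.log ((1 - q0 p0 p1 φ0 φ1 hstar) / q0 p0 p1 φ0 φ1 hstar) -
            Real.log ((1 - A11 φ0 hstar) / A11 φ0 hstar)))) := by
  have main : ∀ i : Fin n, φ0 (hstar i) / φ1 (hstar i) =
      -(p1 / p0) *
        ((Real.log ((1 - q0 p0 p1 φ0 φ1 hstar) / q0 p0 p1 φ0 φ1 hstar) +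
            Real.log ((1 - A22 φ1 hstar) / A22 φ1 hstar)) /
          (Real.log ((1 - q0 p0 p1 φ0 φ1 hstar) / q0 p0 p1 φ0 φ1 hstar) -
            Real.log ((1 - A11 φ0 hstar) / A11 φ0 hstar))) := by
    intro i
    have hup : Function.update hstar i (hstar i) = hstar := Function.update_eq_self i hstar
    have hmax' : IsLocalMax (fun h : Fin n → ℝ => MI p0 p1 φ0 φ1 h) hstar :=
      hmax.isLocalMax ((isOpen_strictMono n).mem_nhds hmono)
    have hline : IsLocalMax (fun t => MI p0 p1 φ0 φ1 (Function.update hstar i t)) (hstar i) := by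
      have hcont : ContinuousAt (fun t : ℝ => Function.update hstar i t) (hstar i) :=
        (continuous_const.update i continuous_id).continuousAt
      have hmax'' : ∀ᶠ h in nhds (Function.update hstar i (hstar i)),
          MI p0 p1 φ0 φ1 h ≤ MI p0 p1 φ0 φ1 (Function.update hstar i (hstar i)) := by
        rw [hup]
        exact hmax'
      exact hcont.eventually hmax''
    set s := otherSign hstar i (hstar i) with hs
    have hs0 : s ≠ 0 := by
      intro h0
      have := abs_otherSign hstar i (hstar i)
      rw [← hs, h0] at this
      simp at this
    have d11 : HasDerivAt (fun t => A11 φ0 (Function.update hstar i t))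
        (s * φ0 (hstar i)) (hstar i) :=
      hasDerivAt_setIntegral_oddUnion hstar hmono i φ0 hi0 hc0
    have d22 : HasDerivAt (fun t => A22 φ1 (Function.update hstar i t))
        (-(s * φ1 (hstar i))) (hstar i) := by
      have hcompl : (fun t => A22 φ1 (Function.update hstar i t)) =
          fun t => (∫ y, φ1 y) - ∫ y in oddUnion (Function.update hstar i t), φ1 y := by
        funext t
        have := integral_add_compl (measurableSet_oddUnion (Function.update hstar i t)) hi1
        simp only [A22]
        linarith
      rw [hcompl]
      exact (hasDerivAt_setIntegral_oddUnion hstar hmono i φ1 hi1 hc1).const_sub _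
    have dq : HasDerivAt (fun t => q0 p0 p1 φ0 φ1 (Function.update hstar i t))
        (p0 * (s * φ0 (hstar i)) + p1 * (-(-(s * φ1 (hstar i))))) (hstar i) :=
      (d11.const_mul p0).add ((d22.const_sub 1).const_mul p1)
    have e11 := HasDerivAt.comp (hstar i) (h₂ := Hb) (by rw [hup]; exact hasDerivAt_Hb hA11) d11
    have e22 := HasDerivAt.comp (hstar i) (h₂ := Hb) (by rw [hup]; exact hasDerivAt_Hb hA22) d22
    have eq := HasDerivAt.comp (hstar i) (h₂ := Hb) (by rw [hup]; exact hasDerivAt_Hb hq0) dq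
    have hcrit := hline.hasDerivAt_eq_zero ((eq.sub (e11.const_mul p0)).sub (e22.const_mul p1))
    have hL : Real.log ((1 - q0 p0 p1 φ0 φ1 hstar) / q0 p0 p1 φ0 φ1 hstar) -
        Real.log ((1 - A11 φ0 hstar) / A11 φ0 hstar) ≠ 0 :=
      fun h0 => hne (logit_injective hq0 hA11 (sub_eq_zero.1 h0))
    generalize Real.log ((1 - q0 p0 p1 φ0 φ1 hstar) / q0 p0 p1 φ0 φ1 hstar) = Lq at *
    generalize Real.log ((1 - A11 φ0 hstar) / A11 φ0 hstar) = La at *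
    generalize Real.log ((1 - A22 φ1 hstar) / A22 φ1 hstar) = Lb at *
    have hp0' : p0 ≠ 0 := hp0.1.ne'
    have hφ : φ1 (hstar i) ≠ 0 := (hpos i).ne'
    have hbal : p0 * φ0 (hstar i) * (Lq - La) + p1 * φ1 (hstar i) * (Lq + Lb) = 0 := by
      apply mul_left_cancel₀ hs0
      linear_combination hcrit
    rw [← mul_div_assoc, div_eq_div_iff hφ hL]
    field_simp
    linear_combination hbal
  exact ⟨fun i j => (main i).trans (main j).symm, main⟩
end

section
/- Assume φ0 and φ1 are continuous, φ1(y) > 0 for all y ∈ ℝ, and the likelihood ratio r(y) = φ0(y)/φ1(y) is strictly monotone on ℝ (strictly increasing or strictly decreasing). Then a single-threshold quantizer is optimal among all finite-threshold quantizers: for every n ≥ 1 and every strictly ordered thresholding vector h ∈ ℝ^n, I_n(h) ≤ sup{ I_1(t) : t ∈ ℝ }. -/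
/-!
A quantizer with decision region `S` has mutual information `info p0 p1 a b`, where `a` and `b`
are the masses of `S` under `φ0` and `φ1`; this is unchanged when `S` is replaced by its
complement, i.e. `(a, b)` by `(1 - a, 1 - b)`, so one may assume `b ≤ a`.

For fixed `b`, the derivative of `info` in `a` is `p0 * (log ((1 - q) / q) - log ((1 - a) / a))`
with `q = p0 * a + p1 * b`, which is nonnegative when `b ≤ a` (then `q ≤ a`). So `info` increases
in `a` on `[b, 1]` (`info_mono`). By the intermediate value theorem (`exists_Iio_integral_eq`) there
is a half-line `T` with `φ1`-mass `b` on the side where the likelihood ratio is large, and the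
Neyman–Pearson argument (`neyman_pearson`) gives `a ≤ ∫_T φ0`. Hence `T`, which comes from a single
threshold, has at least as much mutual information as `S`. The degenerate case `a = b` has zero
information, whereas `info` is nonnegative by concavity of the entropy.
-/

open MeasureTheory Real Set Filter

lemma Hb_eq_binEntropy : Hb = Real.binEntropy := by
  ext w
  simp [Hb, Real.binEntropy, Real.log_inv]
  ring

/-- Mutual information of the binary channel whose output is `0` with probability `a` on input `0`
and with probability `b` on input `1`, the inputs having probabilities `p0` and `p1`. -/
noncomputable def info (p0 p1 a b : ℝ) : ℝ :=
  Real.binEntropy (p0 * a + p1 * b) - p0 * Real.binEntropy a - p1 * Real.binEntropy b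

lemma info_one_sub {p0 p1 : ℝ} (hp : p0 + p1 = 1) (a b : ℝ) :
    info p0 p1 (1 - a) (1 - b) = info p0 p1 a b := by
  have h : p0 * (1 - a) + p1 * (1 - b) = 1 - (p0 * a + p1 * b) := by linear_combination hp
  simp only [info, h, Real.binEntropy_one_sub]

lemma info_self {p0 p1 : ℝ} (hp : p0 + p1 = 1) (b : ℝ) : info p0 p1 b b = 0 := by
  have h : p0 * b + p1 * b = b := by linear_combination b * hp
  simp only [info, h]
  linear_combination (-Real.binEntropy b) * hp

lemma info_nonneg {p0 p1 : ℝ} (h0 : 0 < p0) (h1 : 0 < p1) (hp : p0 + p1 = 1) {a b : ℝ}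
    (ha : a ∈ Icc (0 : ℝ) 1) (hb : b ∈ Icc (0 : ℝ) 1) : 0 ≤ info p0 p1 a b := by
  have := Real.strictConcave_binEntropy.concaveOn.2 ha hb h0.le h1.le hp
  simp only [smul_eq_mul] at this
  unfold info
  linarith

lemma info_le_log_two {p0 p1 : ℝ} (h0 : 0 < p0) (h1 : 0 < p1) {a b : ℝ}
    (ha : a ∈ Icc (0 : ℝ) 1) (hb : b ∈ Icc (0 : ℝ) 1) : info p0 p1 a b ≤ Real.log 2 := by
  have h := Real.binEntropy_le_log_two (p := p0 * a + p1 * b)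
  have h2 := mul_nonneg h0.le (Real.binEntropy_nonneg ha.1 ha.2)
  have h3 := mul_nonneg h1.le (Real.binEntropy_nonneg hb.1 hb.2)
  unfold info
  linarith

lemma info_mono {p0 p1 : ℝ} (h0 : 0 < p0) (h1 : 0 < p1) (hp : p0 + p1 = 1) {b : ℝ}
    (hb : 0 < b) : MonotoneOn (fun a => info p0 p1 a b) (Icc b 1) := by
  have key : ∀ a ∈ Ioo b 1, ∃ d, 0 ≤ d ∧ HasDerivAt (fun a => info p0 p1 a b) d a := by
    rintro a ⟨hba, ha1⟩
    have hqa : p0 * a + p1 * b ≤ a := by nlinarith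
    have hq0 : 0 < p0 * a + p1 * b :=
      add_pos (mul_pos h0 (hb.trans hba)) (mul_pos h1 hb)
    have hlin : HasDerivAt (fun a : ℝ => p0 * a + p1 * b) p0 a := by
      simpa using ((hasDerivAt_id a).const_mul p0).add_const (p1 * b)
    have hq := (Real.hasDerivAt_binEntropy hq0.ne' (hqa.trans_lt ha1).ne).comp a hlin
    have ha := (Real.hasDerivAt_binEntropy (hb.trans hba).ne' ha1.ne).const_mul p0
    refine ⟨_, ?_, (hq.sub ha).sub_const (p1 * Real.binEntropy b)⟩
    have e1 := Real.log_le_log hq0 hqa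
    have e2 := Real.log_le_log (sub_pos.2 ha1) (sub_le_sub_left hqa 1)
    nlinarith
  refine monotoneOn_of_deriv_nonneg (convex_Icc _ _) ?_ ?_ ?_
  · unfold info
    fun_prop
  · intro a ha
    rw [interior_Icc] at ha
    obtain ⟨d, -, hd⟩ := key a ha
    exact hd.differentiableAt.differentiableWithinAt
  · intro a ha
    rw [interior_Icc] at ha
    obtain ⟨d, hd0, hd⟩ := key a ha
    rwa [hd.deriv]

lemma exists_Iio_integral_eq {φ : ℝ → ℝ} (hi : Integrable φ) (hI : ∫ y, φ y = 1)
    {b : ℝ} (hb0 : 0 < b) (hb1 : b < 1) : ∃ t, ∫ y in Iio t, φ y = b := by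
  have hcont : Continuous (fun t => ∫ y in Iic t, φ y) := by
    have : (fun t => ∫ y in Iic t, φ y) = fun t => (∫ y in Iic 0, φ y) + ∫ y in (0 : ℝ)..t, φ y := by
      ext t
      rw [← intervalIntegral.integral_Iic_sub_Iic hi.integrableOn hi.integrableOn]
      ring
    rw [this]
    exact continuous_const.add (hi.continuous_primitive 0)
  have htop : Tendsto (fun t => ∫ y in Iic t, φ y) atTop (nhds 1) := by
    have := (aecover_Iic (μ := volume)
      (tendsto_id (α := ℝ) (x := atTop))).integral_tendsto_of_countably_generated hi
    rwa [hI] at this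
  have hbot : Tendsto (fun t => ∫ y in Ioi t, φ y) atBot (nhds 1) := by
    have := (aecover_Ioi (μ := volume)
      (tendsto_id (α := ℝ) (x := atBot))).integral_tendsto_of_countably_generated hi
    rwa [hI] at this
  obtain ⟨u, hu⟩ := (htop.eventually (lt_mem_nhds hb1)).exists
  obtain ⟨l, hl⟩ := (hbot.eventually (lt_mem_nhds (show 1 - b < 1 by linarith))).exists
  have hs := integral_add_compl (measurableSet_Iic (a := l)) hi
  rw [compl_Iic, hI] at hs
  obtain ⟨t, ht⟩ := mem_range_of_exists_le_of_exists_ge hcont ⟨l, by linarith⟩ ⟨u, hu.le⟩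
  exact ⟨t, by rw [← integral_Iic_eq_integral_Iio]; exact ht⟩

/-- If the likelihood ratio is at least `c` on `T` and at most `c` off `T`, then `T` has the largest
`φ0`-mass among the sets with the same `φ1`-mass. -/
lemma neyman_pearson {φ0 φ1 : ℝ → ℝ} (hi0 : Integrable φ0) (hi1 : Integrable φ1)
    {S T : Set ℝ} (hS : MeasurableSet S) (hT : MeasurableSet T) (c : ℝ)
    (hin : ∀ y ∈ T, c * φ1 y ≤ φ0 y) (hout : ∀ y ∉ T, φ0 y ≤ c * φ1 y)
    (heq : ∫ y in T, φ1 y = ∫ y in S, φ1 y) : ∫ y in S, φ0 y ≤ ∫ y in T, φ0 y := by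
  have hg : Integrable (fun y => φ0 y - c * φ1 y) := hi0.sub (hi1.const_mul c)
  have hle : ∫ y in S, (φ0 y - c * φ1 y) ≤ ∫ y in T, (φ0 y - c * φ1 y) := by
    rw [← integral_indicator hS, ← integral_indicator hT]
    refine integral_mono (hg.indicator hS) (hg.indicator hT) fun y => ?_
    by_cases h1 : y ∈ S <;> by_cases h2 : y ∈ T <;> simp [h1, h2]
    · exact hout y h2
    · exact hin y h2
  have hsplit : ∀ U : Set ℝ, ∫ y in U, (φ0 y - c * φ1 y)
      = (∫ y in U, φ0 y) - c * ∫ y in U, φ1 y := fun U => by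
    rw [integral_sub hi0.integrableOn (hi1.const_mul c).integrableOn, integral_const_mul]
  rw [hsplit, hsplit, heq] at hle
  linarith

lemma setIntegral_mem_Icc {φ : ℝ → ℝ} (h0 : ∀ y, 0 ≤ φ y) (hi : Integrable φ)
    (hI : ∫ y, φ y = 1) (S : Set ℝ) : ∫ y in S, φ y ∈ Icc (0 : ℝ) 1 :=
  ⟨integral_nonneg h0, hI ▸ setIntegral_le_integral hi (Eventually.of_forall h0)⟩

lemma setIntegral_compl_eq {φ : ℝ → ℝ} (hi : Integrable φ)
    (hI : ∫ y, φ y = 1) {S : Set ℝ} (hS : MeasurableSet S) :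
    ∫ y in Sᶜ, φ y = 1 - ∫ y in S, φ y := by
  have := integral_add_compl hS hi
  linarith

lemma oddUnion_single (t : ℝ) : oddUnion (fun _ : Fin 1 => t) = Iio t := by
  ext y
  by_cases h : t ≤ y <;> simp [oddUnion, h]
  exact not_le.1 h

lemma MI_eq_info {p0 p1 : ℝ} {φ0 φ1 : ℝ → ℝ} (hi1 : Integrable φ1) (hI1 : ∫ y, φ1 y = 1)
    {n : ℕ} (h : Fin n → ℝ) : MI p0 p1 φ0 φ1 h =
      info p0 p1 (∫ y in oddUnion h, φ0 y) (∫ y in oddUnion h, φ1 y) := by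
  simp only [MI, q0, A11, A22, info, Hb_eq_binEntropy,
    setIntegral_compl_eq hi1 hI1 (measurableSet_oddUnion h), Real.binEntropy_one_sub, sub_sub_cancel]

/-- A half-line with prescribed `φ1`-mass `b`, lying on the side where the likelihood ratio is
large; `c` is the value of the ratio at its endpoint. -/
lemma exists_halfLine {φ0 φ1 : ℝ → ℝ} (hφ1 : ∀ y, 0 < φ1 y)
    (hi1 : Integrable φ1) (hI1 : ∫ y, φ1 y = 1)
    (hr : StrictMono (fun y => φ0 y / φ1 y) ∨ StrictAnti (fun y => φ0 y / φ1 y))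
    {b : ℝ} (hb0 : 0 < b) (hb1 : b < 1) :
    ∃ (t c : ℝ) (T : Set ℝ), (T = Iio t ∨ T = (Iio t)ᶜ) ∧ ∫ y in T, φ1 y = b ∧
      (∀ y ∈ T, c * φ1 y ≤ φ0 y) ∧ ∀ y ∉ T, φ0 y ≤ c * φ1 y := by
  rcases hr with hr | hr
  · obtain ⟨t, ht⟩ := exists_Iio_integral_eq hi1 hI1 (sub_pos.2 hb1) (sub_lt_self 1 hb0)
    refine ⟨t, φ0 t / φ1 t, (Iio t)ᶜ, Or.inr rfl, ?_, fun y hy => ?_, fun y hy => ?_⟩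
    · rw [setIntegral_compl_eq hi1 hI1 measurableSet_Iio, ht, sub_sub_cancel]
    · exact (le_div_iff₀ (hφ1 y)).1 (hr.monotone (not_lt.1 hy))
    · exact (div_le_iff₀ (hφ1 y)).1 (hr.monotone (not_not.1 hy : y < t).le)
  · obtain ⟨t, ht⟩ := exists_Iio_integral_eq hi1 hI1 hb0 hb1
    refine ⟨t, φ0 t / φ1 t, Iio t, Or.inl rfl, ht, fun y hy => ?_, fun y hy => ?_⟩
    · exact (le_div_iff₀ (hφ1 y)).1 (hr.antitone (le_of_lt hy))
    · exact (div_le_iff₀ (hφ1 y)).1 (hr.antitone (not_lt.1 hy))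

/-- Every decision region whose `φ0`-mass is at least its `φ1`-mass is matched or beaten by a single
threshold. -/
lemma exists_threshold {p0 p1 : ℝ} (h0 : 0 < p0) (h1 : 0 < p1) (hp : p0 + p1 = 1)
    {φ0 φ1 : ℝ → ℝ} (hφ0 : ∀ y, 0 ≤ φ0 y) (hφ1 : ∀ y, 0 < φ1 y)
    (hi0 : Integrable φ0) (hi1 : Integrable φ1)
    (hI0 : ∫ y, φ0 y = 1) (hI1 : ∫ y, φ1 y = 1)
    (hr : StrictMono (fun y => φ0 y / φ1 y) ∨ StrictAnti (fun y => φ0 y / φ1 y))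
    {S : Set ℝ} (hS : MeasurableSet S) (hle : ∫ y in S, φ1 y ≤ ∫ y in S, φ0 y) :
    ∃ t, info p0 p1 (∫ y in S, φ0 y) (∫ y in S, φ1 y) ≤
      info p0 p1 (∫ y in Iio t, φ0 y) (∫ y in Iio t, φ1 y) := by
  have m0 := setIntegral_mem_Icc hφ0 hi0 hI0
  have m1 := setIntegral_mem_Icc (fun y => (hφ1 y).le) hi1 hI1
  rcases hle.eq_or_lt with heq | hlt
  · refine ⟨0, ?_⟩
    rw [heq, info_self hp]
    exact info_nonneg h0 h1 hp (m0 _) (m1 _)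
  -- A set of zero `φ1`-mass is Lebesgue-null, so it would have zero `φ0`-mass as well.
  have hb0 : 0 < ∫ y in S, φ1 y := by
    refine lt_of_le_of_ne (m1 S).1 fun hz => ?_
    have hsupp : Function.support φ1 = univ := by
      ext y
      simp [(hφ1 y).ne']
    have hpos := setIntegral_pos_iff_support_of_nonneg_ae (μ := volume) (s := S)
      (Eventually.of_forall fun y => (hφ1 y).le) hi1.integrableOn
    rw [hsupp, univ_inter, ← hz] at hpos
    have hnull : volume S = 0 := by
      by_contra hne
      exact lt_irrefl _ (hpos.2 (pos_iff_ne_zero.2 hne))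
    rw [setIntegral_measure_zero _ hnull, setIntegral_measure_zero _ hnull] at hlt
    exact lt_irrefl _ hlt
  obtain ⟨t, c, T, hT, hTb, hin, hout⟩ :=
    exists_halfLine hφ1 hi1 hI1 hr hb0 (hlt.trans_le (m0 S).2)
  have hTm : MeasurableSet T := by
    rcases hT with rfl | rfl
    exacts [measurableSet_Iio, measurableSet_Iio.compl]
  have hnp := neyman_pearson hi0 hi1 hS hTm c hin hout hTb
  have hmono := info_mono h0 h1 hp hb0 ⟨hle, (m0 S).2⟩ ⟨hle.trans hnp, (m0 T).2⟩ hnp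
  refine ⟨t, hmono.trans (le_of_eq ?_)⟩
  rw [← hTb]
  rcases hT with rfl | rfl
  · rfl
  · simp only [setIntegral_compl_eq hi1 hI1 measurableSet_Iio,
      setIntegral_compl_eq hi0 hI0 measurableSet_Iio, info_one_sub hp]

/-- if the likelihood ratio `r = φ0/φ1` is strictly monotone, then a
single-threshold quantizer is optimal among all finite-threshold quantizers. -/
theorem stmt_4
    (p0 p1 : ℝ) (hp0 : p0 ∈ Set.Ioo (0:ℝ) 1) (hp1 : p1 ∈ Set.Ioo (0:ℝ) 1)
    (hp : p0 + p1 = 1)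
    (φ0 φ1 : ℝ → ℝ) (hφ0 : ∀ y, 0 ≤ φ0 y) (hφ1 : ∀ y, 0 < φ1 y)
    (hi0 : Integrable φ0) (hi1 : Integrable φ1)
    (hI0 : ∫ y, φ0 y = 1) (hI1 : ∫ y, φ1 y = 1)
    (hc0 : Continuous φ0) (hc1 : Continuous φ1)
    (hr : StrictMono (fun y => φ0 y / φ1 y) ∨ StrictAnti (fun y => φ0 y / φ1 y)) :
    ∀ (n : ℕ), 1 ≤ n → ∀ h : Fin n → ℝ, StrictMono h →
      MI p0 p1 φ0 φ1 h ≤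
        sSup (Set.range (fun t : ℝ => MI p0 p1 φ0 φ1 (fun _ : Fin 1 => t))) := by
  intro n _ h _
  have hsingle : ∀ t : ℝ, MI p0 p1 φ0 φ1 (fun _ : Fin 1 => t) =
      info p0 p1 (∫ y in Iio t, φ0 y) (∫ y in Iio t, φ1 y) := fun t => by
    rw [MI_eq_info hi1 hI1, oddUnion_single]
  have hbdd : BddAbove (Set.range (fun t : ℝ => MI p0 p1 φ0 φ1 (fun _ : Fin 1 => t))) := by
    refine ⟨Real.log 2, ?_⟩
    rintro _ ⟨t, rfl⟩
    simp only [hsingle]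
    exact info_le_log_two hp0.1 hp1.1 (setIntegral_mem_Icc hφ0 hi0 hI0 _)
      (setIntegral_mem_Icc (fun y => (hφ1 y).le) hi1 hI1 _)
  have hm := measurableSet_oddUnion h
  obtain ⟨t, ht⟩ : ∃ t : ℝ, MI p0 p1 φ0 φ1 h ≤ MI p0 p1 φ0 φ1 (fun _ : Fin 1 => t) := by
    simp only [hsingle, MI_eq_info hi1 hI1 h]
    rcases le_total (∫ y in oddUnion h, φ1 y) (∫ y in oddUnion h, φ0 y) with hle | hle
    · exact exists_threshold hp0.1 hp1.1 hp hφ0 hφ1 hi0 hi1 hI0 hI1 hr hm hle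
    · have hc := exists_threshold hp0.1 hp1.1 hp hφ0 hφ1 hi0 hi1 hI0 hI1 hr hm.compl
      simp only [setIntegral_compl_eq hi1 hI1 hm, setIntegral_compl_eq hi0 hI0 hm,
        info_one_sub hp] at hc
      exact hc (by linarith)
  exact ht.trans (le_csSup hbdd ⟨t, rfl⟩)
end

section
/- Let p0, p1 ∈ (0,1) with p0 + p1 = 1, a ∈ (0,1), and f, g ∈ (0,1). Set B = p0·f·(1−f) + p1·g·(1−g). Then the following identity and inequality hold: 1/(f·(1−f)) + p1³·(1−a)²/(p0³·a²·g·(1−g)) − (p0²·a + p1²·(1−a))²/(p0³·a²·B) = p0·p1·(p0·a·g·(1−g) − p1·(1−a)·f·(1−f))² / (p0³·a²·f·(1−f)·g·(1−g)·B) ≥ 0. -/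
/-- the algebraic identity and nonnegativity establishing `G(a) ≥ 0`,
where `B = p0·f·(1−f) + p1·g·(1−g)`. -/
theorem stmt_11
    (p0 p1 a f g : ℝ) (hp0 : p0 ∈ Set.Ioo (0:ℝ) 1) (hp1 : p1 ∈ Set.Ioo (0:ℝ) 1)
    (hp : p0 + p1 = 1) (ha : a ∈ Set.Ioo (0:ℝ) 1)
    (hf : f ∈ Set.Ioo (0:ℝ) 1) (hg : g ∈ Set.Ioo (0:ℝ) 1) :
    (1 / (f * (1 - f)) + p1 ^ 3 * (1 - a) ^ 2 / (p0 ^ 3 * a ^ 2 * g * (1 - g)) -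
        (p0 ^ 2 * a + p1 ^ 2 * (1 - a)) ^ 2 /
          (p0 ^ 3 * a ^ 2 * (p0 * f * (1 - f) + p1 * g * (1 - g))) =
      p0 * p1 * (p0 * a * g * (1 - g) - p1 * (1 - a) * f * (1 - f)) ^ 2 /
        (p0 ^ 3 * a ^ 2 * f * (1 - f) * g * (1 - g) *
          (p0 * f * (1 - f) + p1 * g * (1 - g)))) ∧
    0 ≤ p0 * p1 * (p0 * a * g * (1 - g) - p1 * (1 - a) * f * (1 - f)) ^ 2 /
        (p0 ^ 3 * a ^ 2 * f * (1 - f) * g * (1 - g) *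
          (p0 * f * (1 - f) + p1 * g * (1 - g))) := by
  obtain ⟨hp0, -⟩ := hp0
  obtain ⟨hp1, -⟩ := hp1
  obtain ⟨ha, -⟩ := ha
  obtain ⟨hf0, hf1⟩ := hf
  obtain ⟨hg0, hg1⟩ := hg
  have hf' : 0 < 1 - f := sub_pos.mpr hf1
  have hg' : 0 < 1 - g := sub_pos.mpr hg1
  have hB : 0 < p0 * f * (1 - f) + p1 * g * (1 - g) := by positivity
  refine ⟨?_, by positivity⟩
  -- Naming `1 - f`, `1 - g` and `B` keeps each denominator a product of atoms; after clearing
  -- them, expanding `B` completes the square.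
  generalize hF : 1 - f = F at *
  generalize hG : 1 - g = G at *
  generalize hBdef : p0 * f * F + p1 * g * G = B at *
  field_simp
  rw [← hBdef]
  ring
end

section
/- Let p0, p1 ∈ (0,1) with p0 + p1 = 1 and let f, g : (0,1) → (0,1) be differentiable functions satisfying, for all a ∈ (0,1): f(a) + g(a) ≥ 1, f'(a) > 0, and f'(a) = −(a·p0/((1−a)·p1))·g'(a). Define F(a) = log(f(a)/(1−f(a))) + (p1²·(a−1)/(p0²·a))·log(g(a)/(1−g(a))) − ((p0²·a + p1²·(1−a))/(p0²·a))·log((p0·f(a) + p1·(1−g(a)))/(p0·(1−f(a)) + p1·g(a))). Then F is differentiable with F'(a) ≥ 0 for all a ∈ (0,1); in particular F is nondecreasing on (0,1). -/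
/-!
Write `q = p0 f + p1 (1 - g)`, `c = p1² (1 - a) / (p0² a)` and `L x = log (x / (1 - x))`, so that
`F = L f - c L g - (1 + c) L q` and `F' = S - c' (L g + L q)`, where `S` collects the terms in which
`f`, `g`, `q` are differentiated.

* `c' < 0`, and `L g + L q ≥ 0` because `g + q ≥ 1`, which is equivalent to `f + g ≥ 1`.
* With `t = (1 - a) p1 / (a p0)` the hypothesis reads `g' = - t f'`, and `p0 S / f'` equals
  `p0 / (f (1 - f)) + p1 t² / (g (1 - g)) - (p0 + p1 t)² / (q (1 - q))`. This is nonnegative by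
  the Cauchy–Schwarz inequality and the concavity of `x ↦ x (1 - x)`
  (`sq_div_le_of_mixture`).
-/

/-- The function `F` whose zero characterizes the stationary points of the mutual
information as a function of the posterior level `a`. -/
noncomputable def Fq (p0 p1 : ℝ) (f g : ℝ → ℝ) (a : ℝ) : ℝ :=
  Real.log (f a / (1 - f a)) +
    (p1 ^ 2 * (a - 1) / (p0 ^ 2 * a)) * Real.log (g a / (1 - g a)) -
    ((p0 ^ 2 * a + p1 ^ 2 * (1 - a)) / (p0 ^ 2 * a)) *
      Real.log ((p0 * f a + p1 * (1 - g a)) / (p0 * (1 - f a) + p1 * g a))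

theorem hasDerivAt_logit {h : ℝ → ℝ} {h' a : ℝ} (hh : HasDerivAt h h' a)
    (h0 : 0 < h a) (h1 : h a < 1) :
    HasDerivAt (fun x => Real.log (h x / (1 - h x))) (h' / (h a * (1 - h a))) a := by
  have h2 : 0 < 1 - h a := by linarith
  have hd : HasDerivAt (fun x => h x / (1 - h x))
      ((h' * (1 - h a) - h a * -h') / (1 - h a) ^ 2) a := hh.div (hh.const_sub 1) h2.ne'
  convert hd.log (div_pos h0 h2).ne' using 1
  field_simp
  ring

theorem logit_add_logit_nonneg {x y : ℝ} (hx0 : 0 < x) (hx1 : x < 1) (hy0 : 0 < y) (hy1 : y < 1)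
    (hxy : 1 ≤ x + y) : 0 ≤ Real.log (x / (1 - x)) + Real.log (y / (1 - y)) := by
  have hx : 0 < 1 - x := by linarith
  have hy : 0 < 1 - y := by linarith
  rw [← Real.log_mul (div_pos hx0 hx).ne' (div_pos hy0 hy).ne']
  apply Real.log_nonneg
  rw [div_mul_div_comm, le_div_iff₀ (mul_pos hx hy)]
  nlinarith

/-- Cauchy–Schwarz combined with the concavity of `x ↦ x (1 - x)` at the mixture
`p0 u + p1 (1 - v)`. -/
theorem sq_div_le_of_mixture {p0 p1 u v t : ℝ} (hp0 : 0 < p0) (hp1 : 0 < p1) (hp : p0 + p1 = 1)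
    (hu0 : 0 < u) (hu1 : u < 1) (hv0 : 0 < v) (hv1 : v < 1) :
    (p0 + p1 * t) ^ 2 / ((p0 * u + p1 * (1 - v)) * (1 - (p0 * u + p1 * (1 - v)))) ≤
      p0 / (u * (1 - u)) + p1 * t ^ 2 / (v * (1 - v)) := by
  have hA : 0 < u * (1 - u) := mul_pos hu0 (by linarith)
  have hB : 0 < v * (1 - v) := mul_pos hv0 (by linarith)
  have hconc : p0 * (u * (1 - u)) + p1 * (v * (1 - v)) ≤
      (p0 * u + p1 * (1 - v)) * (1 - (p0 * u + p1 * (1 - v))) := by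
    obtain rfl : p1 = 1 - p0 := by linarith
    -- the concavity gap is `p0 p1 (u - (1 - v))²`
    nlinarith [mul_nonneg (mul_pos hp0 hp1).le (sq_nonneg (u - (1 - v)))]
  generalize (p0 * u + p1 * (1 - v)) * (1 - (p0 * u + p1 * (1 - v))) = Q at *
  generalize u * (1 - u) = A at *
  generalize v * (1 - v) = B at *
  have hM : 0 < p0 * A + p1 * B := by positivity
  calc (p0 + p1 * t) ^ 2 / Q ≤ (p0 + p1 * t) ^ 2 / (p0 * A + p1 * B) := by gcongr
    _ ≤ p0 / A + p1 * t ^ 2 / B := by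
      have key : p0 / A + p1 * t ^ 2 / B - (p0 + p1 * t) ^ 2 / (p0 * A + p1 * B) =
          p0 * p1 * (B - t * A) ^ 2 / (A * B * (p0 * A + p1 * B)) := by
        field_simp
        ring
      have : 0 ≤ p0 * p1 * (B - t * A) ^ 2 / (A * B * (p0 * A + p1 * B)) := by positivity
      linarith

/-- under the listed hypotheses on `f` and `g`, the function `F` is
differentiable with nonnegative derivative on `(0,1)`, hence nondecreasing there. -/
theorem stmt_12
    (p0 p1 : ℝ) (hp0 : p0 ∈ Set.Ioo (0:ℝ) 1) (hp1 : p1 ∈ Set.Ioo (0:ℝ) 1)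
    (hp : p0 + p1 = 1)
    (f g f' g' : ℝ → ℝ)
    (hfmem : ∀ a ∈ Set.Ioo (0:ℝ) 1, f a ∈ Set.Ioo (0:ℝ) 1)
    (hgmem : ∀ a ∈ Set.Ioo (0:ℝ) 1, g a ∈ Set.Ioo (0:ℝ) 1)
    (hfg : ∀ a ∈ Set.Ioo (0:ℝ) 1, 1 ≤ f a + g a)
    (hfd : ∀ a ∈ Set.Ioo (0:ℝ) 1, HasDerivAt f (f' a) a)
    (hgd : ∀ a ∈ Set.Ioo (0:ℝ) 1, HasDerivAt g (g' a) a)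
    (hf'pos : ∀ a ∈ Set.Ioo (0:ℝ) 1, 0 < f' a)
    (hrel : ∀ a ∈ Set.Ioo (0:ℝ) 1, f' a = -(a * p0 / ((1 - a) * p1)) * g' a) :
    (∀ a ∈ Set.Ioo (0:ℝ) 1,
      DifferentiableAt ℝ (Fq p0 p1 f g) a ∧ 0 ≤ deriv (Fq p0 p1 f g) a) ∧
    MonotoneOn (Fq p0 p1 f g) (Set.Ioo 0 1) := by
  obtain ⟨hp0, -⟩ := hp0
  obtain ⟨hp1, -⟩ := hp1
  have key : ∀ a ∈ Set.Ioo (0:ℝ) 1, ∃ D, HasDerivAt (Fq p0 p1 f g) D a ∧ 0 ≤ D := by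
    intro a ha
    obtain ⟨hf0, hf1⟩ := hfmem a ha
    obtain ⟨hg0, hg1⟩ := hgmem a ha
    have hfga := hfg a ha
    have hf' := hf'pos a ha
    have hr := hrel a ha
    have df := hfd a ha
    have dg := hgd a ha
    obtain ⟨ha0, ha1⟩ := ha
    have ha1' : 0 < 1 - a := by linarith
    have dq : HasDerivAt (fun x => p0 * f x + p1 * (1 - g x)) (p0 * f' a + p1 * (-g' a)) a :=
      (df.const_mul p0).add ((dg.const_sub 1).const_mul p1)
    have hq0 : 0 < p0 * f a + p1 * (1 - g a) :=
      add_pos (mul_pos hp0 hf0) (mul_pos hp1 (by linarith))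
    have hq1 : p0 * f a + p1 * (1 - g a) < 1 := by
      nlinarith [mul_pos hp0 (sub_pos.2 hf1), mul_pos hp1 hg0]
    have hgq : 1 ≤ g a + (p0 * f a + p1 * (1 - g a)) := by
      obtain rfl : p1 = 1 - p0 := by linarith
      nlinarith [mul_nonneg hp0.le (sub_nonneg.2 hfga)]
    have dc : HasDerivAt (fun x : ℝ => p1 ^ 2 / p0 ^ 2 * (x⁻¹ - 1))
        (p1 ^ 2 / p0 ^ 2 * (-(a ^ 2)⁻¹)) a :=
      ((hasDerivAt_inv ha0.ne').sub_const 1).const_mul _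
    have Lf := hasDerivAt_logit df hf0 hf1
    have Lg := hasDerivAt_logit dg hg0 hg1
    have Lq := hasDerivAt_logit dq hq0 hq1
    have hF : Fq p0 p1 f g =ᶠ[nhds a] fun x =>
        Real.log (f x / (1 - f x)) -
          (p1 ^ 2 / p0 ^ 2 * (x⁻¹ - 1)) * Real.log (g x / (1 - g x)) -
          (1 + p1 ^ 2 / p0 ^ 2 * (x⁻¹ - 1)) *
            Real.log ((p0 * f x + p1 * (1 - g x)) / (1 - (p0 * f x + p1 * (1 - g x)))) := by
      filter_upwards [lt_mem_nhds ha0] with x hx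
      have e1 : p1 ^ 2 * (x - 1) / (p0 ^ 2 * x) = -(p1 ^ 2 / p0 ^ 2 * (x⁻¹ - 1)) := by
        field_simp
        ring
      have e2 : (p0 ^ 2 * x + p1 ^ 2 * (1 - x)) / (p0 ^ 2 * x) =
          1 + p1 ^ 2 / p0 ^ 2 * (x⁻¹ - 1) := by
        field_simp
      have e3 : p0 * (1 - f x) + p1 * g x = 1 - (p0 * f x + p1 * (1 - g x)) := by
        linear_combination hp
      rw [Fq, e1, e2, e3]
      ring
    refine ⟨_, ((Lf.sub (dc.mul Lg)).sub ((dc.const_add 1).mul Lq)).congr_of_eventuallyEq hF, ?_⟩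
    have hlog := logit_add_logit_nonneg hg0 hg1 hq0 hq1 hgq
    have hcs := sq_div_le_of_mixture (t := (1 - a) * p1 / (a * p0)) hp0 hp1 hp hf0 hf1 hg0 hg1
    have hg'e : g' a = -((1 - a) * p1 / (a * p0)) * f' a := by
      rw [hr]
      field_simp
    have hce : p1 ^ 2 / p0 ^ 2 * (a⁻¹ - 1) = (1 - a) * p1 / (a * p0) * p1 / p0 := by
      field_simp
    have hk : 0 ≤ p1 ^ 2 / p0 ^ 2 * (a ^ 2)⁻¹ := by positivity
    rw [hg'e, hce]
    have h1 := mul_nonneg hk hlog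
    have h2 := mul_nonneg (div_pos hf' hp0).le (sub_nonneg.2 hcs)
    refine (add_nonneg h1 h2).trans_eq ?_
    have hA : f a * (1 - f a) ≠ 0 := (mul_pos hf0 (by linarith)).ne'
    have hB : g a * (1 - g a) ≠ 0 := (mul_pos hg0 (by linarith)).ne'
    have hQ : (p0 * f a + p1 * (1 - g a)) * (1 - (p0 * f a + p1 * (1 - g a))) ≠ 0 :=
      (mul_pos hq0 (by linarith)).ne'
    generalize Real.log (g a / (1 - g a)) = lg
    generalize Real.log ((p0 * f a + p1 * (1 - g a)) / (1 - (p0 * f a + p1 * (1 - g a)))) = lq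
    generalize (p0 * f a + p1 * (1 - g a)) * (1 - (p0 * f a + p1 * (1 - g a))) = Q at *
    generalize f a * (1 - f a) = A at *
    generalize g a * (1 - g a) = B at *
    generalize (1 - a) * p1 / (a * p0) = t at *
    field_simp
    ring
  refine ⟨fun a ha => ?_, ?_⟩
  · obtain ⟨D, hD, h0⟩ := key a ha
    exact ⟨hD.differentiableAt, hD.deriv ▸ h0⟩
  · apply monotoneOn_of_deriv_nonneg (convex_Ioo 0 1)
    · intro a ha
      obtain ⟨D, hD, -⟩ := key a ha
      exact hD.continuousAt.continuousWithinAt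
    · intro a ha
      obtain ⟨D, hD, -⟩ := key a (interior_subset ha)
      exact hD.differentiableAt.differentiableWithinAt
    · intro a ha
      obtain ⟨D, hD, h0⟩ := key a (interior_subset ha)
      exact hD.deriv ▸ h0
end

section
/- Let p0, p1 ∈ (0,1) with p0 + p1 = 1 and let f, g : (0,1) → (0,1) be differentiable functions satisfying, for all a ∈ (0,1): f(a) + g(a) > 1, f'(a) > 0, and f'(a) = −(a·p0/((1−a)·p1))·g'(a). Define I(a) = H_b(p0·f(a) + p1·(1−g(a))) − p0·H_b(f(a)) − p1·H_b(g(a)). Then I has at most one stationary point in (0,1): there exists at most one a* ∈ (0,1) with I'(a*) = 0. Equivalently, the function F(a) = log(f(a)/(1−f(a))) + (p1²·(a−1)/(p0²·a))·log(g(a)/(1−g(a))) − ((p0²·a + p1²·(1−a))/(p0²·a))·log((p0·f(a) + p1·(1−g(a)))/(p0·(1−f(a)) + p1·g(a))) is strictly increasing on (0,1) and hence has at most one zero. -/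
/-- The mutual information as a function of the posterior level `a`. -/
noncomputable def Iq (p0 p1 : ℝ) (f g : ℝ → ℝ) (a : ℝ) : ℝ :=
  Hb (p0 * f a + p1 * (1 - g a)) - p0 * Hb (f a) - p1 * Hb (g a)

/-- The log-odds of `w`, as a difference of logarithms. -/
noncomputable def logOdds (w : ℝ) : ℝ := Real.log w - Real.log (1 - w)

/-- The ratio `p1² (1 - a) / (p0² a)`, which equals `-p1 g' / (p0 f')` at posterior level `a`. -/
noncomputable def ratio (p0 p1 a : ℝ) : ℝ := p1 ^ 2 * (1 - a) / (p0 ^ 2 * a)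

lemma log_div_one_sub {w : ℝ} (h0 : 0 < w) (h1 : w < 1) :
    Real.log (w / (1 - w)) = logOdds w := by
  rw [logOdds, Real.log_div h0.ne' (by linarith)]

lemma hasDerivAt_logOdds {u : ℝ → ℝ} {u' a : ℝ} (hu : HasDerivAt u u' a)
    (h0 : 0 < u a) (h1 : u a < 1) :
    HasDerivAt (fun x => logOdds (u x)) (u' / (u a * (1 - u a))) a := by
  have h2 : 0 < 1 - u a := by linarith
  have h := (hu.log h0.ne').sub ((hu.const_sub 1).log h2.ne')
  refine h.congr_deriv ?_
  field_simp
  ring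

lemma hasDerivAt_Hb_s14 {u : ℝ → ℝ} {u' a : ℝ} (hu : HasDerivAt u u' a)
    (h0 : 0 < u a) (h1 : u a < 1) :
    HasDerivAt (fun x => Hb (u x)) (-u' * logOdds (u a)) a := by
  have h2 : 0 < 1 - u a := by linarith
  have h := ((hu.mul (hu.log h0.ne')).neg).sub
    ((hu.const_sub 1).mul ((hu.const_sub 1).log h2.ne'))
  refine h.congr_deriv ?_
  rw [logOdds]
  field_simp
  ring

lemma hasDerivAt_ratio {p0 p1 a : ℝ} (hp0 : 0 < p0) (ha : 0 < a) :
    HasDerivAt (ratio p0 p1) (-(p1 ^ 2 / (p0 ^ 2 * a ^ 2))) a := by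
  have h := (((hasDerivAt_id a).const_sub 1).const_mul (p1 ^ 2)).div
    ((hasDerivAt_id a).const_mul (p0 ^ 2)) (by simp only [id]; positivity)
  refine h.congr_deriv ?_
  simp only [id]
  field_simp
  ring

/-- Here `x`, `y` are values of `f`, `g`. The middle quantity in the proof is
`(1 + r)² / (p0 x (1 - x) + p1 y (1 - y))`. -/
lemma bracket_nonneg {p0 p1 x y : ℝ} (r : ℝ) (hp0 : 0 < p0) (hp1 : 0 < p1) (hp : p0 + p1 = 1)
    (hx0 : 0 < x) (hx1 : x < 1) (hy0 : 0 < y) (hy1 : y < 1) :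
    (1 + r) ^ 2 / ((p0 * x + p1 * (1 - y)) * (1 - (p0 * x + p1 * (1 - y)))) ≤
      1 / (p0 * (x * (1 - x))) + r ^ 2 / (p1 * (y * (1 - y))) := by
  have hA : 0 < p0 * (x * (1 - x)) := mul_pos hp0 (mul_pos hx0 (by linarith))
  have hB : 0 < p1 * (y * (1 - y)) := mul_pos hp1 (mul_pos hy0 (by linarith))
  have hconc : p0 * (x * (1 - x)) + p1 * (y * (1 - y)) ≤
      (p0 * x + p1 * (1 - y)) * (1 - (p0 * x + p1 * (1 - y))) := by
    obtain rfl : p1 = 1 - p0 := by linarith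
    nlinarith [mul_nonneg (mul_pos hp0 hp1).le (sq_nonneg (x + y - 1))]
  generalize p0 * (x * (1 - x)) = A at *
  generalize p1 * (y * (1 - y)) = B at *
  calc _ ≤ (1 + r) ^ 2 / (A + B) := by gcongr
    _ ≤ 1 / A + r ^ 2 / B := by
      rw [div_add_div _ _ hA.ne' hB.ne', div_le_div_iff₀ (by positivity) (by positivity)]
      nlinarith [sq_nonneg (B - r * A)]

lemma mix_mem {p0 p1 x y : ℝ} (hp0 : 0 < p0) (hp1 : 0 < p1) (hp : p0 + p1 = 1)
    (hx0 : 0 < x) (hx1 : x < 1) (hy0 : 0 < y) (hy1 : y < 1) :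
    0 < p0 * x + p1 * (1 - y) ∧ p0 * x + p1 * (1 - y) < 1 := by
  have h1 := mul_pos hp0 hx0
  have h2 := mul_pos hp1 hy0
  have h3 : 0 < p1 * (1 - y) := mul_pos hp1 (by linarith)
  have h4 : 0 < p0 * (1 - x) := mul_pos hp0 (by linarith)
  exact ⟨by linarith, by linarith⟩

lemma logOdds_add_pos {p0 p1 x y : ℝ} (hp0 : 0 < p0) (hp1 : 0 < p1) (hp : p0 + p1 = 1)
    (hx0 : 0 < x) (hx1 : x < 1) (hy0 : 0 < y) (hy1 : y < 1) (hxy : 1 < x + y) :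
    0 < logOdds y + logOdds (p0 * x + p1 * (1 - y)) := by
  obtain ⟨-, hq1⟩ := mix_mem hp0 hp1 hp hx0 hx1 hy0 hy1
  have hq : 1 - y < p0 * x + p1 * (1 - y) := by
    obtain rfl : p1 = 1 - p0 := by linarith
    nlinarith [mul_pos hp0 (sub_pos.2 hxy)]
  have h1 := Real.log_lt_log (by linarith : 0 < 1 - y) hq
  have h2 := Real.log_lt_log (by linarith : 0 < 1 - (p0 * x + p1 * (1 - y)))
    (by linarith : 1 - (p0 * x + p1 * (1 - y)) < y)
  unfold logOdds
  linarith

lemma Fq_eq {p0 p1 : ℝ} {f g : ℝ → ℝ} {a : ℝ} (hp0 : 0 < p0) (hp1 : 0 < p1) (hp : p0 + p1 = 1)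
    (ha : 0 < a) (hf : f a ∈ Set.Ioo (0:ℝ) 1) (hg : g a ∈ Set.Ioo (0:ℝ) 1) :
    Fq p0 p1 f g a = logOdds (f a) - ratio p0 p1 a * logOdds (g a) -
      (1 + ratio p0 p1 a) * logOdds (p0 * f a + p1 * (1 - g a)) := by
  obtain ⟨hq0, hq1⟩ := mix_mem hp0 hp1 hp hf.1 hf.2 hg.1 hg.2
  have hden : p0 * (1 - f a) + p1 * g a = 1 - (p0 * f a + p1 * (1 - g a)) := by
    linear_combination hp
  rw [Fq, hden, log_div_one_sub hf.1 hf.2, log_div_one_sub hg.1 hg.2, log_div_one_sub hq0 hq1,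
    ratio]
  field_simp
  ring

/-- The relation between `f'` and `g'`, solved for `g'`. -/
lemma gderiv_eq {p0 p1 a u v : ℝ} (hp0 : 0 < p0) (hp1 : 0 < p1) (ha0 : 0 < a) (ha1 : a < 1)
    (h : u = -(a * p0 / ((1 - a) * p1)) * v) : v = -(p0 / p1) * ratio p0 p1 a * u := by
  have : 1 - a ≠ 0 := by linarith
  rw [h, ratio]
  field_simp

lemma hasDerivAt_mix {p0 p1 a u v : ℝ} {f g : ℝ → ℝ} (hp1 : 0 < p1)
    (hf : HasDerivAt f u a) (hg : HasDerivAt g v a)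
    (hv : v = -(p0 / p1) * ratio p0 p1 a * u) :
    HasDerivAt (fun x => p0 * f x + p1 * (1 - g x)) (p0 * (1 + ratio p0 p1 a) * u) a := by
  refine ((hf.const_mul p0).add ((hg.const_sub 1).const_mul p1)).congr_deriv ?_
  rw [hv]
  field_simp

lemma deriv_Iq {p0 p1 a u v : ℝ} {f g : ℝ → ℝ} (hp0 : 0 < p0) (hp1 : 0 < p1) (hp : p0 + p1 = 1)
    (ha : 0 < a) (hf : f a ∈ Set.Ioo (0:ℝ) 1) (hg : g a ∈ Set.Ioo (0:ℝ) 1)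
    (hfd : HasDerivAt f u a) (hgd : HasDerivAt g v a)
    (hv : v = -(p0 / p1) * ratio p0 p1 a * u) :
    deriv (Iq p0 p1 f g) a = p0 * u * Fq p0 p1 f g a := by
  obtain ⟨hq0, hq1⟩ := mix_mem hp0 hp1 hp hf.1 hf.2 hg.1 hg.2
  have h := ((hasDerivAt_Hb_s14 (hasDerivAt_mix hp1 hfd hgd hv) hq0 hq1).sub
    ((hasDerivAt_Hb_s14 hfd hf.1 hf.2).const_mul p0)).sub
    ((hasDerivAt_Hb_s14 hgd hg.1 hg.2).const_mul p1)
  refine (HasDerivAt.deriv (f := Iq p0 p1 f g) h).trans ?_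
  rw [Fq_eq hp0 hp1 hp ha hf hg, hv]
  field_simp
  ring

/-- under the listed hypotheses, `F` is strictly increasing on `(0,1)`
(hence has at most one zero) and `I` has at most one stationary point in `(0,1)`. -/
theorem stmt_14
    (p0 p1 : ℝ) (hp0 : p0 ∈ Set.Ioo (0:ℝ) 1) (hp1 : p1 ∈ Set.Ioo (0:ℝ) 1)
    (hp : p0 + p1 = 1)
    (f g f' g' : ℝ → ℝ)
    (hfmem : ∀ a ∈ Set.Ioo (0:ℝ) 1, f a ∈ Set.Ioo (0:ℝ) 1)
    (hgmem : ∀ a ∈ Set.Ioo (0:ℝ) 1, g a ∈ Set.Ioo (0:ℝ) 1)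
    (hfg : ∀ a ∈ Set.Ioo (0:ℝ) 1, 1 < f a + g a)
    (hfd : ∀ a ∈ Set.Ioo (0:ℝ) 1, HasDerivAt f (f' a) a)
    (hgd : ∀ a ∈ Set.Ioo (0:ℝ) 1, HasDerivAt g (g' a) a)
    (hf'pos : ∀ a ∈ Set.Ioo (0:ℝ) 1, 0 < f' a)
    (hrel : ∀ a ∈ Set.Ioo (0:ℝ) 1, f' a = -(a * p0 / ((1 - a) * p1)) * g' a) :
    StrictMonoOn (Fq p0 p1 f g) (Set.Ioo 0 1) ∧
    ∀ a b : ℝ, a ∈ Set.Ioo (0:ℝ) 1 → b ∈ Set.Ioo (0:ℝ) 1 →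
      deriv (Iq p0 p1 f g) a = 0 → deriv (Iq p0 p1 f g) b = 0 → a = b := by
  obtain ⟨hp0, -⟩ := hp0
  obtain ⟨hp1, -⟩ := hp1
  have hv : ∀ a ∈ Set.Ioo (0:ℝ) 1, g' a = -(p0 / p1) * ratio p0 p1 a * f' a :=
    fun a ha => gderiv_eq hp0 hp1 ha.1 ha.2 (hrel a ha)
  have hmono : StrictMonoOn (Fq p0 p1 f g) (Set.Ioo 0 1) := by
    have hG : ∀ a ∈ Set.Ioo (0:ℝ) 1, ∃ d : ℝ, 0 < d ∧
        HasDerivAt (fun x => logOdds (f x) - ratio p0 p1 x * logOdds (g x) -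
          (1 + ratio p0 p1 x) * logOdds (p0 * f x + p1 * (1 - g x))) d a := by
      intro a ha
      have hf := hfmem a ha
      have hg := hgmem a ha
      have ha0 : 0 < a := ha.1
      obtain ⟨hq0, hq1⟩ := mix_mem hp0 hp1 hp hf.1 hf.2 hg.1 hg.2
      have hr := hasDerivAt_ratio (p1 := p1) hp0 ha0
      refine ⟨_, ?_, ((hasDerivAt_logOdds (hfd a ha) hf.1 hf.2).sub
        (hr.mul (hasDerivAt_logOdds (hgd a ha) hg.1 hg.2))).sub
        ((hr.const_add 1).mul (hasDerivAt_logOdds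
          (hasDerivAt_mix hp1 (hfd a ha) (hgd a ha) (hv a ha)) hq0 hq1))⟩
      have hb := bracket_nonneg (ratio p0 p1 a) hp0 hp1 hp hf.1 hf.2 hg.1 hg.2
      have hl := logOdds_add_pos hp0 hp1 hp hf.1 hf.2 hg.1 hg.2 (hfg a ha)
      have hc : 0 < p1 ^ 2 / (p0 ^ 2 * a ^ 2) := by positivity
      have h1 := mul_nonneg (mul_pos hp0 (hf'pos a ha)).le (sub_nonneg.2 hb)
      refine (add_pos_of_nonneg_of_pos h1 (mul_pos hc hl)).trans_eq ?_
      have e1 : 0 < 1 - f a := by linarith [hf.2]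
      have e2 : 0 < 1 - g a := by linarith [hg.2]
      have e3 : 0 < 1 - (p0 * f a + p1 * (1 - g a)) := by linarith
      have e4 := hf.1
      have e5 := hg.1
      rw [hv a ha]
      generalize p1 ^ 2 / (p0 ^ 2 * a ^ 2) = c
      generalize ratio p0 p1 a = r
      generalize p0 * f a + p1 * (1 - g a) = q at *
      generalize 1 - f a = F at *
      generalize 1 - g a = G at *
      generalize 1 - q = Q at *
      field_simp
      ring
    refine StrictMonoOn.congr (strictMonoOn_of_deriv_pos (convex_Ioo 0 1) ?_ ?_)
      fun a ha => (Fq_eq hp0 hp1 hp ha.1 (hfmem a ha) (hgmem a ha)).symm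
    · intro a ha
      obtain ⟨d, -, hd⟩ := hG a ha
      exact hd.continuousAt.continuousWithinAt
    · intro a ha
      rw [interior_Ioo] at ha
      obtain ⟨d, hpos, hd⟩ := hG a ha
      rwa [hd.deriv]
  have hzero : ∀ a ∈ Set.Ioo (0:ℝ) 1, deriv (Iq p0 p1 f g) a = 0 → Fq p0 p1 f g a = 0 := by
    intro a ha h
    rw [deriv_Iq hp0 hp1 hp ha.1 (hfmem a ha) (hgmem a ha) (hfd a ha) (hgd a ha) (hv a ha)] at h
    exact (mul_eq_zero.1 h).resolve_left (mul_pos hp0 (hf'pos a ha)).ne'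
  exact ⟨hmono, fun a b ha hb h1 h2 =>
    hmono.injOn ha hb ((hzero a ha h1).trans (hzero b hb h2).symm)⟩
end
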